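/- The only infinite uniquely-Wilf permutation class C with C ∩ S_3 = {123, 321} is I ∪ D, the class of monotone permutations. -/

import Mathlib

/-!
A non-monotone injective sequence has three terms forming a peak or a valley, so a non-monotone
permutation contains a non-monotone pattern of size `3`. As `123` and `321` are the only members
of `C` of size `3`, every member of `C` is an identity or a reversal
(`eq_idPerm_or_eq_revPermS_of_mem`).

Unique Wilf-equivalence is then used for `123` and `321` alone. For `n ≥ 3` the only possible
member of `C` of size `n` avoiding `123` is the reversal, and the only one avoiding `321` is the
identity; as the two counts agree, the identity and the reversal of size `n` are both in `C` or
both outside it. Since `C` is infinite it has arbitrarily long members, so it contains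
arbitrarily long identities and reversals, and by downward closure all of them.
-/

abbrev PermS : Type := Σ n : ℕ, Equiv.Perm (Fin n)

def Contains (π σ : PermS) : Prop :=
  ∃ f : Fin π.1 ↪o Fin σ.1, ∀ i j : Fin π.1, π.2 i < π.2 j ↔ σ.2 (f i) < σ.2 (f j)

def IsPermClass (C : Set PermS) : Prop :=
  ∀ π σ : PermS, σ ∈ C → Contains π σ → π ∈ C

noncomputable def avCount (C : Set PermS) (π : PermS) (n : ℕ) : ℕ :=
  {σ : PermS | σ ∈ C ∧ σ.1 = n ∧ ¬ Contains π σ}.ncard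

noncomputable def invCount (C : Set PermS) (π : PermS) (n : ℕ) : ℕ :=
  {σ : PermS | σ ∈ C ∧ σ.1 = n ∧ Contains π σ}.ncard

def WilfEquivRel (C : Set PermS) (π σ : PermS) : Prop :=
  ∀ n : ℕ, avCount C π n = avCount C σ n

def UniquelyWilf (C : Set PermS) : Prop :=
  ∀ π σ : PermS, π ∈ C → σ ∈ C → π.1 = σ.1 → WilfEquivRel C π σ

def KNBalanced (C : Set PermS) (k n : ℕ) : Prop :=
  ∀ π σ : PermS, π ∈ C → σ ∈ C → π.1 = k → σ.1 = k → invCount C π n = invCount C σ n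

def Av (X : Set PermS) : Set PermS := {σ | ∀ π ∈ X, ¬ Contains π σ}

def idPerm (k : ℕ) : PermS := ⟨k, 1⟩
def revPermS (k : ℕ) : PermS := ⟨k, Fin.revPerm⟩

def p132 : PermS := ⟨3, Equiv.mk ![0,2,1] ![0,2,1] (by decide) (by decide)⟩
def p213 : PermS := ⟨3, Equiv.mk ![1,0,2] ![1,0,2] (by decide) (by decide)⟩
def p231 : PermS := ⟨3, Equiv.mk ![1,2,0] ![2,0,1] (by decide) (by decide)⟩
def p312 : PermS := ⟨3, Equiv.mk ![2,0,1] ![1,2,0] (by decide) (by decide)⟩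

lemma eq_idPerm_of_strictMono (σ : PermS) (h : StrictMono σ.2) : σ = idPerm σ.1 := by
  obtain ⟨n, s⟩ := σ
  have h1 : s = 1 := by
    ext i : 1
    have := Subsingleton.elim (h.orderIsoOfSurjective s s.surjective) (OrderIso.refl (Fin n))
    simpa using congrArg (fun e => e i) this
  simp only [h1, idPerm]

lemma eq_revPermS_of_strictAnti (σ : PermS) (h : StrictAnti σ.2) : σ = revPermS σ.1 := by
  obtain ⟨n, s⟩ := σ
  have h1 : s = Fin.revPerm := by
    have hm : StrictMono (s.trans Fin.revPerm) := fun i j hij => by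
      simpa using h hij
    have := eq_idPerm_of_strictMono ⟨n, s.trans Fin.revPerm⟩ hm
    simp only [idPerm, Sigma.mk.injEq, heq_eq_eq, true_and] at this
    ext i : 1
    have hi := congrArg (fun e => Fin.rev (e i)) this
    simpa using hi
  simp only [h1, revPermS]

lemma strictMono_of_contains_idPerm {π : PermS} {n : ℕ} (h : Contains π (idPerm n)) :
    StrictMono π.2 := by
  obtain ⟨f, hf⟩ := h
  intro i j hij
  exact (hf i j).2 (f.strictMono hij)

lemma strictAnti_of_contains_revPermS {π : PermS} {n : ℕ} (h : Contains π (revPermS n)) :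
    StrictAnti π.2 := by
  obtain ⟨f, hf⟩ := h
  intro i j hij
  exact (hf j i).2 (Fin.rev_lt_rev.2 (f.strictMono hij))

lemma idPerm_contains {k n : ℕ} (h : k ≤ n) : Contains (idPerm k) (idPerm n) :=
  ⟨Fin.castLEOrderEmb h, fun _ _ => Iff.rfl⟩

lemma revPermS_contains {k n : ℕ} (h : k ≤ n) : Contains (revPermS k) (revPermS n) :=
  ⟨Fin.castLEOrderEmb h, fun i j =>
    (Fin.rev_lt_rev (i := i) (j := j)).trans
      (Fin.rev_lt_rev (i := Fin.castLEOrderEmb h i) (j := Fin.castLEOrderEmb h j)).symm⟩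

lemma not_strictAnti_idPerm {k : ℕ} (hk : 2 ≤ k) : ¬ StrictAnti (idPerm k).2 := fun h =>
  absurd (h (show (⟨0, by omega⟩ : Fin k) < ⟨1, by omega⟩ by simp))
    (not_lt.2 (Fin.mk_le_mk.2 (Nat.zero_le 1)))

lemma not_strictMono_revPermS {k : ℕ} (hk : 2 ≤ k) : ¬ StrictMono (revPermS k).2 := fun h =>
  absurd (h (show (⟨0, by omega⟩ : Fin k) < ⟨1, by omega⟩ by simp))
    (not_lt.2 (Fin.rev_le_rev.2 (by simp)))

/-- Any choice of `k` positions in a permutation carries a pattern of size `k`. -/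
lemma exists_pattern {n k : ℕ} (s : Equiv.Perm (Fin n)) (f : Fin k ↪o Fin n) :
    ∃ p : Equiv.Perm (Fin k), ∀ i j, p i < p j ↔ s (f i) < s (f j) := by
  have hinj : Function.Injective (fun i => s (f i)) := s.injective.comp f.injective
  let T : Finset (Fin n) := Finset.univ.image (fun i => s (f i))
  have hT : T.card = k := by simp [T, Finset.card_image_of_injective _ hinj]
  have hmem : ∀ i, s (f i) ∈ T := fun i => Finset.mem_image_of_mem _ (Finset.mem_univ i)
  let g : Fin k → Fin k := fun i => (T.orderIsoOfFin hT).symm ⟨s (f i), hmem i⟩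
  have hg : Function.Injective g := fun i j hij => by
    have := (T.orderIsoOfFin hT).symm.injective hij
    exact hinj (Subtype.mk.inj this)
  refine ⟨Equiv.ofBijective g (Finite.injective_iff_bijective.1 hg), fun i j => ?_⟩
  simp [g]

lemma exists_pattern_of_lt {n : ℕ} (s : Equiv.Perm (Fin n)) {a b c : Fin n}
    (hab : a < b) (hbc : b < c) :
    ∃ p : Equiv.Perm (Fin 3), Contains ⟨3, p⟩ ⟨n, s⟩ ∧ (p 0 < p 1 ↔ s a < s b) ∧
      (p 1 < p 2 ↔ s b < s c) := by
  have hf : StrictMono ![a, b, c] := by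
    rw [Fin.strictMono_iff_lt_succ]
    intro i
    fin_cases i <;> simpa
  obtain ⟨p, hp⟩ := exists_pattern s (OrderEmbedding.ofStrictMono _ hf)
  exact ⟨p, ⟨_, hp⟩, by simpa using hp 0 1, by simpa using hp 1 2⟩

lemma eq_idPerm_or_eq_revPermS_of_mem {C : Set PermS} (hC : IsPermClass C)
    (h3 : {p : PermS | p ∈ C ∧ p.1 = 3} = {idPerm 3, revPermS 3}) {σ : PermS} (hσ : σ ∈ C) :
    σ = idPerm σ.1 ∨ σ = revPermS σ.1 := by
  by_cases hm : Monotone σ.2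
  · exact Or.inl (eq_idPerm_of_strictMono σ (hm.strictMono_of_injective σ.2.injective))
  by_cases ha : Antitone σ.2
  · exact Or.inr (eq_revPermS_of_strictAnti σ (ha.strictAnti_of_injective σ.2.injective))
  exfalso
  obtain ⟨a, b, c, hab, hbc, h⟩ := not_monotone_not_antitone_iff_exists_lt_lt.1 ⟨hm, ha⟩
  obtain ⟨p, hp, h01, h12⟩ := exists_pattern_of_lt σ.2 hab hbc
  have hpC : (⟨3, p⟩ : PermS) ∈ {p : PermS | p ∈ C ∧ p.1 = 3} := ⟨hC _ _ hσ hp, rfl⟩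
  rw [h3] at hpC
  -- In `123` and `321` the two consecutive steps go the same way, unlike in a peak or a valley.
  have hstep : p 0 < p 1 ↔ p 1 < p 2 := by
    rcases hpC with hpC | hpC
    · obtain rfl : p = 1 := by simpa [idPerm] using hpC
      decide
    · obtain rfl : p = Fin.revPerm := by simpa [revPermS] using hpC
      decide
  rw [h01, h12] at hstep
  rcases h with ⟨h1, h2⟩ | ⟨h1, h2⟩
  · exact lt_asymm h2 (hstep.1 h1)
  · exact lt_asymm h1 (hstep.2 h2)

lemma mem_Av_revPermS_two (σ : PermS) : σ ∈ Av {revPermS 2} ↔ σ = idPerm σ.1 := by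
  refine ⟨fun h => eq_idPerm_of_strictMono σ fun i j hij => ?_, fun h => ?_⟩
  · by_contra hlt
    have hlt' : σ.2 j < σ.2 i :=
      lt_of_le_of_ne (not_lt.1 hlt) fun e => hij.ne' (σ.2.injective e)
    have hf : StrictMono ![i, j] := by
      rw [Fin.strictMono_iff_lt_succ]
      intro x
      fin_cases x
      simpa
    have hpat : ∀ x y : Fin 2,
        (Fin.revPerm : Equiv.Perm (Fin 2)) x < Fin.revPerm y ↔
          σ.2 (![i, j] x) < σ.2 (![i, j] y) := by
      simp [Fin.forall_fin_two, hlt', hlt'.le]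
    exact h _ rfl ⟨OrderEmbedding.ofStrictMono _ hf, hpat⟩
  · rw [h]
    rintro _ rfl hc
    exact not_strictMono_revPermS le_rfl (strictMono_of_contains_idPerm hc)

lemma mem_Av_idPerm_two (σ : PermS) : σ ∈ Av {idPerm 2} ↔ σ = revPermS σ.1 := by
  refine ⟨fun h => eq_revPermS_of_strictAnti σ fun i j hij => ?_, fun h => ?_⟩
  · by_contra hlt
    have hlt' : σ.2 i < σ.2 j :=
      lt_of_le_of_ne (not_lt.1 hlt) fun e => hij.ne (σ.2.injective e)
    have hf : StrictMono ![i, j] := by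
      rw [Fin.strictMono_iff_lt_succ]
      intro x
      fin_cases x
      simpa
    have hpat : ∀ x y : Fin 2,
        (1 : Equiv.Perm (Fin 2)) x < (1 : Equiv.Perm (Fin 2)) y ↔
          σ.2 (![i, j] x) < σ.2 (![i, j] y) := by
      simp [Fin.forall_fin_two, hlt', hlt'.le]
    exact h _ rfl ⟨OrderEmbedding.ofStrictMono _ hf, hpat⟩
  · rw [h]
    rintro _ rfl hc
    exact not_strictAnti_idPerm le_rfl (strictAnti_of_contains_revPermS hc)

/-- In a set of identities and reversals, the members of size `n ≥ 3` avoiding `123` number `1`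
or `0` according to whether the reversal is present. -/
lemma avCount_idPerm_three {C : Set PermS} {n : ℕ} (hn : 3 ≤ n)
    (hmon : ∀ σ ∈ C, σ = idPerm σ.1 ∨ σ = revPermS σ.1) :
    avCount C (idPerm 3) n ≠ 0 ↔ revPermS n ∈ C := by
  have key : {σ : PermS | σ ∈ C ∧ σ.1 = n ∧ ¬ Contains (idPerm 3) σ} =
      {σ | σ = revPermS n ∧ revPermS n ∈ C} := by
    ext σ
    constructor
    · rintro ⟨hσ, rfl, hc⟩
      rcases hmon σ hσ with h | h
      · exact absurd (h ▸ idPerm_contains hn) hc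
      · exact ⟨h, h ▸ hσ⟩
    · rintro ⟨rfl, h⟩
      exact ⟨h, rfl, fun hc =>
        not_strictAnti_idPerm (by norm_num) (strictAnti_of_contains_revPermS hc)⟩
  rw [avCount, key]
  by_cases h : revPermS n ∈ C <;> simp [h]

/-- In a set of identities and reversals, the members of size `n ≥ 3` avoiding `321` number `1`
or `0` according to whether the identity is present. -/
lemma avCount_revPermS_three {C : Set PermS} {n : ℕ} (hn : 3 ≤ n)
    (hmon : ∀ σ ∈ C, σ = idPerm σ.1 ∨ σ = revPermS σ.1) :
    avCount C (revPermS 3) n ≠ 0 ↔ idPerm n ∈ C := by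
  have key : {σ : PermS | σ ∈ C ∧ σ.1 = n ∧ ¬ Contains (revPermS 3) σ} =
      {σ | σ = idPerm n ∧ idPerm n ∈ C} := by
    ext σ
    constructor
    · rintro ⟨hσ, rfl, hc⟩
      rcases hmon σ hσ with h | h
      · exact ⟨h, h ▸ hσ⟩
      · exact absurd (h ▸ revPermS_contains hn) hc
    · rintro ⟨rfl, h⟩
      exact ⟨h, rfl, fun hc =>
        not_strictMono_revPermS (by norm_num) (strictMono_of_contains_idPerm hc)⟩
  rw [avCount, key]
  by_cases h : idPerm n ∈ C <;> simp [h]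

lemma exists_mem_size_ge {C : Set PermS} (hInf : C.Infinite) (n : ℕ) : ∃ σ ∈ C, n ≤ σ.1 := by
  by_contra! h
  refine hInf (Set.Finite.subset (Set.finite_range
    (fun x : Σ m : Fin n, Equiv.Perm (Fin m) => (⟨x.1, x.2⟩ : PermS))) fun σ hσ => ?_)
  exact ⟨⟨⟨σ.1, h σ hσ⟩, σ.2⟩, rfl⟩

theorem stmt9 (C : Set PermS) (hC : IsPermClass C) (hInf : C.Infinite)
    (hW : UniquelyWilf C)
    (h3 : {p : PermS | p ∈ C ∧ p.1 = 3} = {idPerm 3, revPermS 3}) :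
    C = Av {revPermS 2} ∪ Av {idPerm 2} := by
  have hmon : ∀ σ ∈ C, σ = idPerm σ.1 ∨ σ = revPermS σ.1 :=
    fun σ hσ => eq_idPerm_or_eq_revPermS_of_mem hC h3 hσ
  have hi : idPerm 3 ∈ C := (h3.symm ▸ Or.inl rfl : idPerm 3 ∈ {p : PermS | p ∈ C ∧ p.1 = 3}).1
  have hr : revPermS 3 ∈ C :=
    (h3.symm ▸ Or.inr rfl : revPermS 3 ∈ {p : PermS | p ∈ C ∧ p.1 = 3}).1
  have hiff : ∀ n, 3 ≤ n → (idPerm n ∈ C ↔ revPermS n ∈ C) := fun n hn => by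
    rw [← avCount_idPerm_three hn hmon, ← avCount_revPermS_three hn hmon,
      hW _ _ hi hr rfl n]
  have hall : ∀ n, idPerm n ∈ C ∧ revPermS n ∈ C := fun n => by
    obtain ⟨σ, hσ, hle⟩ := exists_mem_size_ge hInf (max n 3)
    have hn : n ≤ σ.1 := le_trans (le_max_left _ _) hle
    have h3n : 3 ≤ σ.1 := le_trans (le_max_right _ _) hle
    have hboth : idPerm σ.1 ∈ C ∧ revPermS σ.1 ∈ C := by
      rcases hmon σ hσ with h | h
      · have h' : idPerm σ.1 ∈ C := h ▸ hσ
        exact ⟨h', (hiff _ h3n).1 h'⟩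
      · have h' : revPermS σ.1 ∈ C := h ▸ hσ
        exact ⟨(hiff _ h3n).2 h', h'⟩
    exact ⟨hC _ _ hboth.1 (idPerm_contains hn), hC _ _ hboth.2 (revPermS_contains hn)⟩
  ext σ
  rw [Set.mem_union, mem_Av_revPermS_two, mem_Av_idPerm_two]
  refine ⟨hmon σ, ?_⟩
  rintro (h | h)
  · exact h ▸ (hall σ.1).1
  · exact h ▸ (hall σ.1).2
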